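/- Let (Ω, 𝔽, ℙ) be a probability space and let τ : Ω → [0,∞) be a measurable random variable with 𝔼[τ] < ∞. Suppose that for every α > 0 one has ∫_α^∞ ℙ(τ > t) dt ≤ 𝔼[τ] · ℙ(τ > α). Then for every positive integer k, 𝔼[τ^k] ≤ k! · (𝔼[τ])^k. -/

import Mathlib

open MeasureTheory Set
open scoped ENNReal

/-!
Write `G t = ℙ(τ > t)` and `m = 𝔼[τ]`. The layer-cake formula gives
`𝔼[τ^(n+1)] = ∫_{t > 0} G(t) (n+1) t^n dt`, which is `n+1` times the `n`-th moment of the measure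
`ν = G(t) dt` on `(0, ∞)`. Applying the same formula to that moment of `ν`, for which the tail
`ν(a, ∞) = ∫_a^∞ G` is at most `m G(a)` by hypothesis, yields
`𝔼[τ^(n+2)] ≤ (n+2) m ∫_{a > 0} G(a) (n+1) a^n da = (n+2) m 𝔼[τ^(n+1)]`
(`lintegral_pow_add_two_le`), and the bound follows by induction from `𝔼[τ] = m`.
-/

/-- The layer-cake formula for natural powers, over an arbitrary measure. -/
lemma lintegral_pow_succ_eq {α : Type*} [MeasurableSpace α] (ν : Measure α) (f : α → ℝ)
    (hf : Measurable f) (hf0 : 0 ≤ᵐ[ν] f) (n : ℕ) :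
    ∫⁻ x, ENNReal.ofReal (f x) ^ (n + 1) ∂ν =
      ∫⁻ t in Ioi (0 : ℝ), ν {x | t < f x} * ENNReal.ofReal ((n + 1) * t ^ n) := by
  rw [← lintegral_comp_eq_lintegral_meas_lt_mul ν hf0 hf.aemeasurable
    (g := fun t : ℝ => (n + 1) * t ^ n)]
  · refine lintegral_congr_ae ?_
    filter_upwards [hf0] with x hx
    have hx' : 0 ≤ f x := hx
    rw [← ENNReal.ofReal_pow hx', intervalIntegral.integral_const_mul, integral_pow]
    congr 1
    have : (n : ℝ) + 1 ≠ 0 := by positivity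
    field_simp
    simp
  · intro t _
    exact Continuous.intervalIntegrable (by fun_prop) _ _
  · filter_upwards [ae_restrict_mem measurableSet_Ioi] with t ht
    have : (0 : ℝ) < t := ht
    positivity

/-- The moment recursion: each moment is at most `(n+2) m` times the preceding one. The tail
hypothesis enters as a bound on the tails of the measure with density `t ↦ ℙ(τ > t)` on `(0, ∞)`. -/
lemma lintegral_pow_add_two_le {Ω : Type*} [MeasurableSpace Ω] (μ : Measure Ω)
    (τ : Ω → ℝ) (hmeas : Measurable τ) (hnonneg : ∀ ω, 0 ≤ τ ω) (m : ℝ≥0∞)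
    (hyp : ∀ α : ℝ, 0 < α → ∫⁻ t in Ioi α, μ {ω | t < τ ω} ≤ m * μ {ω | α < τ ω}) (n : ℕ) :
    ∫⁻ ω, ENNReal.ofReal (τ ω) ^ (n + 2) ∂μ ≤
      (n + 2 : ℕ) * m * ∫⁻ ω, ENNReal.ofReal (τ ω) ^ (n + 1) ∂μ := by
  set G : ℝ → ℝ≥0∞ := fun t => μ {ω | t < τ ω} with hGdef
  have hG : Measurable G := by
    refine Antitone.measurable fun s t hst => measure_mono fun ω hω => ?_
    exact lt_of_le_of_lt hst hω
  set ν : Measure ℝ := (volume.restrict (Ioi (0 : ℝ))).withDensity G with hν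
  have hν0 : 0 ≤ᵐ[ν] (fun t : ℝ => t) := by
    refine (withDensity_absolutelyContinuous _ G).ae_le ?_
    filter_upwards [ae_restrict_mem measurableSet_Ioi] with t ht
    exact le_of_lt ht
  have htail : ∀ a : ℝ, 0 < a → ν {t | a < t} ≤ m * G a := by
    intro a ha
    have hset : {t : ℝ | a < t} = Ioi a := rfl
    -- On `(a, ∞)` the restriction to `(0, ∞)` is invisible, so this tail is `∫_a^∞ G`.
    rw [hset, hν, withDensity_apply _ measurableSet_Ioi, Measure.restrict_restrict measurableSet_Ioi,
      inter_eq_left.2 (Ioi_subset_Ioi ha.le)]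
    exact hyp a ha
  calc ∫⁻ ω, ENNReal.ofReal (τ ω) ^ (n + 2) ∂μ
      = ∫⁻ t in Ioi (0 : ℝ), G t * ENNReal.ofReal (((n + 1 : ℕ) + 1) * t ^ (n + 1)) :=
        lintegral_pow_succ_eq μ τ hmeas (Filter.Eventually.of_forall hnonneg) (n + 1)
    _ = ∫⁻ t in Ioi (0 : ℝ), (n + 2 : ℕ) * (G t * ENNReal.ofReal t ^ (n + 1)) := by
        refine setLIntegral_congr_fun measurableSet_Ioi fun t ht => ?_
        have ht' : (0 : ℝ) ≤ t := le_of_lt ht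
        have hc : (((n + 1 : ℕ) : ℝ) + 1) = ((n + 2 : ℕ) : ℝ) := by push_cast; ring
        rw [hc, ENNReal.ofReal_mul (by positivity), ENNReal.ofReal_natCast,
          ENNReal.ofReal_pow ht']
        ring
    _ = (n + 2 : ℕ) * ∫⁻ t, ENNReal.ofReal t ^ (n + 1) ∂ν := by
        rw [lintegral_const_mul _ (by fun_prop), hν,
          lintegral_withDensity_eq_lintegral_mul _ hG (by fun_prop)]
        rfl
    _ = (n + 2 : ℕ) * ∫⁻ a in Ioi (0 : ℝ), ν {t | a < t} * ENNReal.ofReal ((n + 1) * a ^ n) := by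
        rw [lintegral_pow_succ_eq ν (fun t => t) measurable_id hν0 n]
    _ ≤ (n + 2 : ℕ) * ∫⁻ a in Ioi (0 : ℝ), m * (G a * ENNReal.ofReal ((n + 1) * a ^ n)) := by
        refine mul_le_mul_right (setLIntegral_mono' measurableSet_Ioi fun a ha => ?_) _
        rw [← mul_assoc]
        exact mul_le_mul_left (htail a ha) _
    _ = (n + 2 : ℕ) * m * ∫⁻ ω, ENNReal.ofReal (τ ω) ^ (n + 1) ∂μ := by
        rw [lintegral_const_mul _ (by fun_prop), mul_assoc,
          lintegral_pow_succ_eq μ τ hmeas (Filter.Eventually.of_forall hnonneg) n]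

/-- If `τ ≥ 0` has finite mean and satisfies
`∫_α^∞ ℙ(τ > t) dt ≤ 𝔼[τ]·ℙ(τ > α)` for all `α > 0`, then
`𝔼[τ^k] ≤ k!·(𝔼[τ])^k` for every positive integer `k`. -/
theorem stmt_19 {Ω : Type*} [MeasurableSpace Ω] (μ : Measure Ω) [IsProbabilityMeasure μ]
    (τ : Ω → ℝ) (hmeas : Measurable τ) (hnonneg : ∀ ω, 0 ≤ τ ω)
    (hfin : ∫⁻ ω, ENNReal.ofReal (τ ω) ∂μ ≠ ∞)
    (hyp : ∀ α : ℝ, 0 < α →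
      ∫⁻ t in Ioi α, μ {ω | t < τ ω} ≤
        (∫⁻ ω, ENNReal.ofReal (τ ω) ∂μ) * μ {ω | α < τ ω}) :
    ∀ k : ℕ, 1 ≤ k →
      ∫⁻ ω, ENNReal.ofReal (τ ω) ^ k ∂μ ≤
        (k.factorial : ℝ≥0∞) * (∫⁻ ω, ENNReal.ofReal (τ ω) ∂μ) ^ k := by
  intro k hk
  induction k, hk using Nat.le_induction with
  | base => simp
  | succ k hk ih =>
    obtain ⟨n, rfl⟩ : ∃ n, k = n + 1 := ⟨k - 1, by omega⟩
    refine (lintegral_pow_add_two_le μ τ hmeas hnonneg _ hyp n).trans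
      ((mul_le_mul_right ih _).trans_eq ?_)
    rw [Nat.factorial_succ (n + 1)]
    push_cast
    ring
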